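/- For every integer r ≥ 2, the geodesic cover number of the complete bipartite graph K_{r,r} satisfies gcover(K_{r,r}) = ⌈2r/3⌉. -/

import Mathlib

/-!
Two vertices of `K_{r,r}` are at distance at most `2`, so a geodesic has at most three vertices
(`Geodesic.length_support_le`) and a cover of the `2r` vertices needs at least `2r/3` geodesics.

Conversely, two vertices of one side together with any vertex of the other side lie on a common
geodesic (`exists_geodesic_of_adj_adj`). Put `k = ⌈2r/3⌉` and split `k = a + b` with `a = ⌈k/2⌉`.
Using `a` geodesics with two left vertices and one right vertex, and `b` geodesics with one left
and two right vertices, all vertices are covered, because `2a + b ≥ r` and `a + 2b ≥ r`.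
-/

open SimpleGraph

/-- A geodesic (isometric path) of a graph `G`: a path whose length equals the distance
between its end vertices. -/
structure Geodesic {V : Type*} (G : SimpleGraph V) where
  first : V
  last : V
  walk : G.Walk first last
  isPath : walk.IsPath
  length_eq : walk.length = G.dist first last

/-- The geodesic cover number of `G`: the minimum cardinality of a set of geodesics whose
supports together cover all vertices of `G`. -/
noncomputable def gcover {V : Type*} (G : SimpleGraph V) : ℕ :=
  sInf {n | ∃ S : Set (Geodesic G), S.Finite ∧ S.ncard = n ∧
    ∀ v : V, ∃ p ∈ S, v ∈ p.walk.support}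

/-- The vertices `u` and `w` may coincide; the geodesic is then the single edge `uv`. -/
lemma exists_geodesic_of_adj_adj {V : Type*} {G : SimpleGraph V} {u v w : V}
    (huv : G.Adj u v) (hvw : G.Adj v w) (huw : ¬ G.Adj u w) :
    ∃ p : Geodesic G, u ∈ p.walk.support ∧ v ∈ p.walk.support ∧ w ∈ p.walk.support := by
  by_cases h : u = w
  · subst h
    have hl : (Walk.cons huv Walk.nil).length = G.dist u v := by
      simp [SimpleGraph.dist_eq_one_iff_adj.2 huv]
    exact ⟨⟨u, v, _, Walk.isPath_of_length_eq_dist _ hl, hl⟩, by simp⟩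
  · have hl : (Walk.cons huv (Walk.cons hvw Walk.nil)).length = G.dist u w := by
      have h1 := SimpleGraph.dist_le (Walk.cons huv (Walk.cons hvw Walk.nil))
      have h2 := (Walk.cons huv (Walk.cons hvw Walk.nil)).reachable.one_lt_dist_of_ne_of_not_adj
        h huw
      simp only [Walk.length_cons, Walk.length_nil] at h1 ⊢
      omega
    exact ⟨⟨u, w, _, Walk.isPath_of_length_eq_dist _ hl, hl⟩, by simp⟩

lemma dist_completeBipartiteGraph_le (r : ℕ) (u v : Fin r ⊕ Fin r) :
    (completeBipartiteGraph (Fin r) (Fin r)).dist u v ≤ 2 := by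
  -- In each case a walk of length at most `2` is exhibited. Between two vertices of one side it
  -- passes through the vertex of the other side with the same index as `u`.
  rcases u with u | u <;> rcases v with v | v
  · exact (SimpleGraph.dist_le (Walk.cons (v := Sum.inr u) (by simp)
      (Walk.cons (by simp) Walk.nil))).trans (by simp)
  · exact (SimpleGraph.dist_le (Walk.cons (by simp) Walk.nil)).trans (by simp)
  · exact (SimpleGraph.dist_le (Walk.cons (by simp) Walk.nil)).trans (by simp)
  · exact (SimpleGraph.dist_le (Walk.cons (v := Sum.inl u) (by simp)
      (Walk.cons (by simp) Walk.nil))).trans (by simp)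

lemma Geodesic.length_support_le {r : ℕ}
    (p : Geodesic (completeBipartiteGraph (Fin r) (Fin r))) : p.walk.support.length ≤ 3 := by
  have := dist_completeBipartiteGraph_le r p.first p.last
  rw [Walk.length_support, p.length_eq]
  omega

lemma two_mul_le_three_mul_ncard {r : ℕ}
    {S : Set (Geodesic (completeBipartiteGraph (Fin r) (Fin r)))} (hS : S.Finite)
    (hcov : ∀ v, ∃ p ∈ S, v ∈ p.walk.support) : 2 * r ≤ 3 * S.ncard := by
  classical
  have hsub : (Finset.univ : Finset (Fin r ⊕ Fin r)) ⊆
      hS.toFinset.biUnion fun p => p.walk.support.toFinset := by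
    intro v _
    obtain ⟨p, hp, hv⟩ := hcov v
    simp only [Finset.mem_biUnion, Set.Finite.mem_toFinset, List.mem_toFinset]
    exact ⟨p, hp, hv⟩
  have h1 := Finset.card_le_card hsub
  have h2 := Finset.card_biUnion_le_card_mul hS.toFinset (fun p => p.walk.support.toFinset) 3
    fun p _ => (List.toFinset_card_le _).trans p.length_support_le
  rw [Set.ncard_eq_toFinset_card S hS]
  simp only [Finset.card_univ, Fintype.card_sum, Fintype.card_fin] at h1
  omega

lemma exists_cover (r : ℕ) (hr : 2 ≤ r) :
    ∃ S : Set (Geodesic (completeBipartiteGraph (Fin r) (Fin r))), S.Finite ∧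
      S.ncard ≤ (2 * r + 2) / 3 ∧ ∀ v, ∃ p ∈ S, v ∈ p.walk.support := by
  obtain ⟨k, hk⟩ : ∃ k, k = (2 * r + 2) / 3 := ⟨_, rfl⟩
  obtain ⟨a, ha⟩ : ∃ a, a = (k + 1) / 2 := ⟨_, rfl⟩
  -- Indices that overshoot are clipped to `r - 1`, which may merge the two ends of a path.
  let c : ℕ → Fin r := fun n => ⟨min n (r - 1), by omega⟩
  have hc : ∀ x : Fin r, c x = x := fun x => Fin.ext (by have := x.2; simp only [c]; omega)
  have hL : ∀ i : ℕ, ∃ p : Geodesic (completeBipartiteGraph (Fin r) (Fin r)),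
      Sum.inl (c (2 * i)) ∈ p.walk.support ∧ Sum.inr (c i) ∈ p.walk.support ∧
      Sum.inl (c (2 * i + 1)) ∈ p.walk.support := fun i =>
    exists_geodesic_of_adj_adj (by simp) (by simp) (by simp)
  have hR : ∀ j : ℕ, ∃ p : Geodesic (completeBipartiteGraph (Fin r) (Fin r)),
      Sum.inr (c (a + 2 * j)) ∈ p.walk.support ∧ Sum.inl (c (2 * a + j)) ∈ p.walk.support ∧
      Sum.inr (c (a + 2 * j + 1)) ∈ p.walk.support := fun j =>
    exists_geodesic_of_adj_adj (by simp) (by simp) (by simp)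
  choose f hf0 hf1 hf2 using hL
  choose g hg0 hg1 hg2 using hR
  refine ⟨f '' Set.Iio a ∪ g '' Set.Iio (k - a),
    ((Set.finite_Iio _).image _).union ((Set.finite_Iio _).image _), ?_, ?_⟩
  · have h1 := Set.ncard_union_le (f '' Set.Iio a) (g '' Set.Iio (k - a))
    have h2 := Set.ncard_image_le (f := f) (Set.finite_Iio a)
    have h3 := Set.ncard_image_le (f := g) (Set.finite_Iio (k - a))
    simp only [Set.ncard_Iio_nat] at h2 h3
    omega
  · rintro (x | y)
    · have hx := x.2
      by_cases h : (x : ℕ) < 2 * a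
      · refine ⟨f (x / 2), Or.inl ⟨_, Set.mem_Iio.2 (by omega), rfl⟩, ?_⟩
        rcases Nat.mod_two_eq_zero_or_one x with hm | hm
        · have := hf0 (x / 2)
          rwa [show 2 * ((x : ℕ) / 2) = x by omega, hc] at this
        · have := hf2 (x / 2)
          rwa [show 2 * ((x : ℕ) / 2) + 1 = x by omega, hc] at this
      · refine ⟨g (x - 2 * a), Or.inr ⟨_, Set.mem_Iio.2 (by omega), rfl⟩, ?_⟩
        have := hg1 (x - 2 * a)
        rwa [show 2 * a + ((x : ℕ) - 2 * a) = x by omega, hc] at this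
    · have hy := y.2
      by_cases h : (y : ℕ) < a
      · refine ⟨f y, Or.inl ⟨_, Set.mem_Iio.2 h, rfl⟩, ?_⟩
        have := hf1 y
        rwa [hc] at this
      · refine ⟨g ((y - a) / 2), Or.inr ⟨_, Set.mem_Iio.2 (by omega), rfl⟩, ?_⟩
        rcases Nat.mod_two_eq_zero_or_one (y - a) with hm | hm
        · have := hg0 ((y - a) / 2)
          rwa [show a + 2 * (((y : ℕ) - a) / 2) = y by omega, hc] at this
        · have := hg2 ((y - a) / 2)
          rwa [show a + 2 * (((y : ℕ) - a) / 2) + 1 = y by omega, hc] at this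

/-- For every integer `r ≥ 2`, the geodesic cover number of the complete bipartite graph
`K_{r,r}` equals `⌈2r/3⌉` (note `⌈2r/3⌉ = (2r + 2)/3` in natural number division). -/
theorem gcover_completeBipartite (r : ℕ) (hr : 2 ≤ r) :
    gcover (completeBipartiteGraph (Fin r) (Fin r)) = (2 * r + 2) / 3 := by
  obtain ⟨S, hS, hcard, hcov⟩ := exists_cover r hr
  apply le_antisymm
  · refine le_trans ?_ hcard
    exact Nat.sInf_le ⟨S, hS, rfl, hcov⟩
  · refine le_csInf ⟨_, S, hS, rfl, hcov⟩ ?_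
    rintro n ⟨T, hT, rfl, hTcov⟩
    have := two_mul_le_three_mul_ncard hT hTcov
    omega
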